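/- Let n_c, n_a be natural numbers and n = n_c + n_a, let c : (Fin n → ℝ) → (Fin n_c → ℝ) and q : ℝ → (Fin n → ℝ) each be twice continuously differentiable, with c(q(t)) = 0 for all t ∈ ℝ. For each t let J(t) be the matrix of the Fréchet derivative of c at q(t) with unactuated block J_u(t) and actuated block J_a(t), suppose J_u(t) is invertible for all t, and let G(t) be the n × n_a matrix with unactuated rows −J_u(t)⁻¹ J_a(t) and actuated rows the identity. Let Ġ(t) denote the derivative at t of the matrix-valued map t ↦ G(t). Then for all t, q̈(t) = G(t) · q̈_a(t) + Ġ(t) · q̇_a(t), where q̇_a(t) and q̈_a(t) are the actuated blocks of the first and second derivatives of q. -/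

import Mathlib

/-!
Differentiating `c (q t) = 0` gives `J q̇ = J_u q̇_u + J_a q̇_a = 0`, and inverting `J_u` turns this
into the velocity identity `q̇ = G q̇_a`. This holds for all times, so both sides may be
differentiated, and the product rule yields `q̈ = G q̈_a + Ġ q̇_a`. The product rule needs `G` to be
differentiable: the entries of `J` are differentiable since `c` and `q` are `C²`, and Cramer's rule
`J_u⁻¹ = (det J_u)⁻¹ adj J_u` passes this on to the entries of `J_u⁻¹`. All of this is done
entrywise, so no norm on matrices is needed.
-/

open Matrix

theorem differentiable_det {m : ℕ} {A : ℝ → Matrix (Fin m) (Fin m) ℝ}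
    (hA : ∀ i j, Differentiable ℝ (fun t => A t i j)) :
    Differentiable ℝ (fun t => (A t).det) := by
  simp only [Matrix.det_apply']
  fun_prop

theorem differentiable_inv_entry {m : ℕ} {A : ℝ → Matrix (Fin m) (Fin m) ℝ}
    (hA : ∀ i j, Differentiable ℝ (fun t => A t i j)) (hu : ∀ t, IsUnit (A t)) (i j : Fin m) :
    Differentiable ℝ (fun t => (A t)⁻¹ i j) := by
  have hdet : ∀ t, (A t).det ≠ 0 := fun t =>
    ((Matrix.isUnit_iff_isUnit_det (A t)).1 (hu t)).ne_zero
  have hadj : Differentiable ℝ (fun t => (A t).adjugate i j) := by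
    simp only [Matrix.adjugate_apply]
    apply differentiable_det
    intro k l
    by_cases hk : k = j
    · subst hk
      simp
    · simpa [Matrix.updateRow_ne hk] using hA k l
  simp only [Matrix.inv_def, Ring.inverse_eq_inv', Matrix.smul_apply, smul_eq_mul]
  exact ((differentiable_det hA).inv hdet).mul hadj

/-- Acceleration claim of Theorem 1: along a twice continuously differentiable
constrained trajectory with invertible unactuated constraint-Jacobian block,
`q̈ = G q̈_a + Ġ q̇_a`, where `G` has unactuated rows `-J_u⁻¹ J_a`, actuated rows
the identity, and `Ġ` is its (entrywise) time derivative. Configurations are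
indexed by `Fin n_c ⊕ Fin n_a` (unactuated block first), so `n = n_c + n_a`. -/
theorem acceleration_projection_along_trajectory
    (n_c n_a : ℕ)
    (c : (Fin n_c ⊕ Fin n_a → ℝ) → (Fin n_c → ℝ))
    (hc : ContDiff ℝ 2 c)
    (q : ℝ → (Fin n_c ⊕ Fin n_a → ℝ))
    (hq : ContDiff ℝ 2 q)
    (hcq : ∀ t : ℝ, c (q t) = 0)
    (J : ℝ → Matrix (Fin n_c) (Fin n_c ⊕ Fin n_a) ℝ)
    (hJ : ∀ t : ℝ, J t =
      LinearMap.toMatrix' (fderiv ℝ c (q t) : (Fin n_c ⊕ Fin n_a → ℝ) →ₗ[ℝ] (Fin n_c → ℝ)))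
    (J_u : ℝ → Matrix (Fin n_c) (Fin n_c) ℝ)
    (hJu : ∀ t : ℝ, J_u t = (J t).submatrix id Sum.inl)
    (J_a : ℝ → Matrix (Fin n_c) (Fin n_a) ℝ)
    (hJa : ∀ t : ℝ, J_a t = (J t).submatrix id Sum.inr)
    (hJuInv : ∀ t : ℝ, IsUnit (J_u t))
    (G : ℝ → Matrix (Fin n_c ⊕ Fin n_a) (Fin n_a) ℝ)
    (hG : ∀ t : ℝ, G t =
      Matrix.fromRows (-((J_u t)⁻¹ * J_a t)) (1 : Matrix (Fin n_a) (Fin n_a) ℝ))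
    (Gdot : ℝ → Matrix (Fin n_c ⊕ Fin n_a) (Fin n_a) ℝ)
    (hGdot : ∀ (t : ℝ) (i : Fin n_c ⊕ Fin n_a) (j : Fin n_a),
      Gdot t i j = deriv (fun s => G s i j) t) :
    ∀ t : ℝ,
      deriv (deriv q) t =
        G t *ᵥ (deriv (deriv q) t ∘ Sum.inr) + Gdot t *ᵥ (deriv q t ∘ Sum.inr) := by
  have hqd : Differentiable ℝ q := hq.differentiable (by norm_num)
  have hq' : Differentiable ℝ (deriv q) := (hq.iterate_deriv' 1 1).differentiable (by norm_num)
  have hcd : Differentiable ℝ c := hc.differentiable (by norm_num)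
  have hc' : Differentiable ℝ (fderiv ℝ c) :=
    (hc.fderiv_right (m := 1) (by norm_num)).differentiable (by norm_num)
  have hJd : ∀ i j, Differentiable ℝ (fun t => J t i j) := by
    intro i j
    simp only [hJ, LinearMap.toMatrix'_apply, ContinuousLinearMap.coe_coe]
    have h : Differentiable ℝ (fun t => fderiv ℝ c (q t) (Pi.single j 1)) :=
      (hc'.comp hqd).clm_apply (differentiable_const _)
    exact differentiable_pi.1 h i
  have hGd : ∀ i j, Differentiable ℝ (fun t => G t i j) := by
    intro i j
    rcases i with i | i
    · have hu : ∀ k, Differentiable ℝ (fun t => (J_u t)⁻¹ i k) :=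
        differentiable_inv_entry (fun k l => by simpa [hJu] using hJd k (Sum.inl l)) hJuInv i
      have ha : ∀ k, Differentiable ℝ (fun t => J_a t k j) :=
        fun k => by simpa [hJa] using hJd k (Sum.inr j)
      simp only [hG, Matrix.fromRows_apply_inl, Matrix.neg_apply, Matrix.mul_apply]
      exact (Differentiable.fun_sum fun k _ => (hu k).mul (ha k)).neg
    · simp [hG]
  have hJq : ∀ t, J t *ᵥ deriv q t = 0 := by
    intro t
    have h1 : HasDerivAt (fun s => c (q s)) (fderiv ℝ c (q t) (deriv q t)) t :=
      (hcd (q t)).hasFDerivAt.comp_hasDerivAt t (hqd t).hasDerivAt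
    simp only [hcq] at h1
    rw [hJ, LinearMap.toMatrix'_mulVec]
    exact h1.unique (hasDerivAt_const t 0)
  have hvel : ∀ t, deriv q t = G t *ᵥ (deriv q t ∘ Sum.inr) := by
    intro t
    have hblock : J_u t *ᵥ (deriv q t ∘ Sum.inl) + J_a t *ᵥ (deriv q t ∘ Sum.inr) = 0 := by
      rw [← hJq t]
      ext i
      simp [Matrix.mulVec, dotProduct, Fintype.sum_sum_type, hJu, hJa]
    have hdet := (Matrix.isUnit_iff_isUnit_det (J_u t)).1 (hJuInv t)
    have hu : deriv q t ∘ Sum.inl = -((J_u t)⁻¹ * J_a t) *ᵥ (deriv q t ∘ Sum.inr) := by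
      rw [Matrix.neg_mulVec, ← Matrix.mulVec_mulVec, ← Matrix.mulVec_neg,
        ← eq_neg_of_add_eq_zero_left hblock, Matrix.mulVec_mulVec,
        Matrix.nonsing_inv_mul _ hdet, Matrix.one_mulVec]
    rw [hG, Matrix.fromRows_mulVec, ← hu, Matrix.one_mulVec, Sum.elim_comp_inl_inr]
  intro t
  have hacc := hasDerivAt_pi.1 (hq' t).hasDerivAt
  ext i
  have hR : HasDerivAt (fun s => ∑ j, G s i j * deriv q s (Sum.inr j))
      (∑ j, (Gdot t i j * deriv q t (Sum.inr j) + G t i j * deriv (deriv q) t (Sum.inr j))) t := by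
    refine HasDerivAt.fun_sum fun j _ => ?_
    rw [hGdot]
    exact (hGd i j t).hasDerivAt.mul (hacc (Sum.inr j))
  have heq : (fun s => deriv q s i) = fun s => ∑ j, G s i j * deriv q s (Sum.inr j) :=
    funext fun s => congrFun (hvel s) i
  rw [← heq] at hR
  rw [(hacc i).unique hR, Finset.sum_add_distrib, add_comm]
  rfl
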